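/- Let n ≥ 1, d ∈ ℝ^n with d > 0 entrywise, y ∈ ℝ^n, and σ ∈ S_n. Then E_{d,y}(σ) = y if and only if y_{σ(1)}/d_{σ(1)} ≥ y_{σ(2)}/d_{σ(2)} ≥ … ≥ y_{σ(n)}/d_{σ(n)}. -/

import Mathlib

/-!
Write `t i = y i / d i`. For every slope `t` and every set `S` of indices, bounding each
`y i - t * d i` with `i ∈ S` by its positive part gives
`∑_{i ∈ S} y i ≤ ∑ j, max (y j - t * d j) 0 + t * ∑_{i ∈ S} d i`, with equality iff
`t` separates the ratios `t i` over `S` from those over its complement. Minimising over `t`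
among the ratios, `th_{d,y}(∑_{i ∈ S} d i) = ∑_{i ∈ S} y i` iff no ratio outside `S` exceeds one
inside `S`. Since `E_{d,y}(σ) = y` says that this equality holds for each initial segment
`{σ 1, …, σ j}`, it says that the ratios are non-increasing along `σ`.
-/

open Finset

noncomputable def th {n : ℕ} (d y : Fin n → ℝ) (c : ℝ) : ℝ :=
  sInf ((fun i => (∑ j, max (y j - y i / d i * d j) 0) + y i / d i * c) ''
    {i : Fin n | 0 < d i})

noncomputable def psum {n : ℕ} (d : Fin n → ℝ) (σ : Equiv.Perm (Fin n)) (j : ℕ) : ℝ :=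
  ∑ i ∈ Finset.univ.filter (fun i : Fin n => (i : ℕ) < j), d (σ i)

noncomputable def Emap {n : ℕ} (d y : Fin n → ℝ) (σ : Equiv.Perm (Fin n)) : Fin n → ℝ :=
  fun k => th d y (psum d σ ((σ.symm k : ℕ) + 1)) - th d y (psum d σ (σ.symm k : ℕ))

def dStoch {n : ℕ} (d : Fin n → ℝ) (A : Matrix (Fin n) (Fin n) ℝ) : Prop :=
  (∀ i j, 0 ≤ A i j) ∧ (∀ j, ∑ i, A i j = 1) ∧ A.mulVec d = d

def Mset {n : ℕ} (d y : Fin n → ℝ) : Set (Fin n → ℝ) :=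
  {x | ∃ A : Matrix (Fin n) (Fin n) ℝ, dStoch d A ∧ A.mulVec y = x}

noncomputable def Aentry {n : ℕ} (d : Fin n → ℝ) (σ τ : Equiv.Perm (Fin n))
    (α : ℕ → Fin n) (j k : Fin n) : ℝ :=
  if k = α j.val ∧ (α j.val).val < (α (j.val + 1)).val then
    (psum d τ ((α j.val).val + 1) - psum d σ j.val) / d (τ (α j.val))
  else if (α j.val).val < k.val ∧ k.val < (α (j.val + 1)).val then 1
  else if (α j.val).val < (α (j.val + 1)).val ∧ k = α (j.val + 1) then
    (psum d σ (j.val + 1) - psum d τ (α (j.val + 1)).val) / d (τ (α (j.val + 1)))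
  else if α j.val = α (j.val + 1) ∧ k = α (j.val + 1) then
    d (σ j) / d (τ (α (j.val + 1)))
  else 0

noncomputable def Amat {n : ℕ} (d : Fin n → ℝ) (σ τ : Equiv.Perm (Fin n))
    (α : ℕ → Fin n) : Matrix (Fin n) (Fin n) ℝ :=
  Matrix.of fun p q => Aentry d σ τ α (σ.symm p) (τ.symm q)

section SupportLine

variable {ι : Type*} [Fintype ι]

/-- The lowest affine function of `c` with slope `t` lying above all the points
`(∑ i ∈ S, d i, ∑ i ∈ S, y i)`. The thermomajorization curve is the minimum of these functions
over the slopes `t = y i / d i` with `0 < d i`. -/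
noncomputable def supportLine (d y : ι → ℝ) (t c : ℝ) : ℝ :=
  (∑ j, max (y j - t * d j) 0) + t * c

theorem supportLine_sum_sub_sum [DecidableEq ι] (d y : ι → ℝ) (t : ℝ) (S : Finset ι) :
    supportLine d y t (∑ i ∈ S, d i) - ∑ i ∈ S, y i =
      ∑ k, (max (y k - t * d k) 0 - if k ∈ S then y k - t * d k else 0) := by
  simp only [supportLine, sum_sub_distrib, sum_ite_mem, univ_inter, ← mul_sum]
  ring

theorem max_zero_sub_ite_nonneg {α : Type*} [AddCommGroup α] [LinearOrder α]
    [IsOrderedAddMonoid α] (a : α) (p : Prop) [Decidable p] :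
    0 ≤ max a 0 - if p then a else 0 := by
  split_ifs <;> simp

theorem sum_le_supportLine_sum (d y : ι → ℝ) (t : ℝ) (S : Finset ι) :
    ∑ i ∈ S, y i ≤ supportLine d y t (∑ i ∈ S, d i) := by
  classical
  rw [← sub_nonneg, supportLine_sum_sub_sum]
  exact sum_nonneg fun k _ => max_zero_sub_ite_nonneg _ _

theorem supportLine_sum_eq_sum_iff (d y : ι → ℝ) (t : ℝ) (S : Finset ι) :
    supportLine d y t (∑ i ∈ S, d i) = ∑ i ∈ S, y i ↔
      (∀ k ∈ S, t * d k ≤ y k) ∧ ∀ k ∉ S, y k ≤ t * d k := by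
  classical
  rw [← sub_eq_zero, supportLine_sum_sub_sum,
    sum_eq_zero_iff_of_nonneg fun k _ => max_zero_sub_ite_nonneg _ _, ← forall_and]
  refine forall_congr' fun k => ?_
  by_cases hk : k ∈ S <;> simp [hk, sub_eq_zero]

end SupportLine

theorem exists_forall_le_and_forall_notMem_le_iff {ι α : Type*} [Finite ι] [Nonempty ι]
    [LinearOrder α] (f : ι → α) (S : Finset ι) :
    (∃ i, (∀ k ∈ S, f i ≤ f k) ∧ ∀ l ∉ S, f l ≤ f i) ↔ ∀ k ∈ S, ∀ l ∉ S, f l ≤ f k := by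
  constructor
  · rintro ⟨i, hi_le, le_hi⟩ k hk l hl
    exact (le_hi l hl).trans (hi_le k hk)
  · intro h
    rcases S.eq_empty_or_nonempty with rfl | hS
    · obtain ⟨i, hi⟩ := Finite.exists_max f
      exact ⟨i, by simp, fun l _ => hi l⟩
    · obtain ⟨i, hiS, hi⟩ := S.exists_min_image f hS
      exact ⟨i, hi, h i hiS⟩

section PartialSum

variable {n : ℕ} (d : Fin n → ℝ) (σ : Equiv.Perm (Fin n))

theorem psum_eq_sum_symm_lt (j : ℕ) : psum d σ j = ∑ k with (σ.symm k : ℕ) < j, d k :=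
  sum_equiv σ (by simp) fun _ _ => rfl

theorem psum_zero : psum d σ 0 = 0 := by
  simp [psum]

theorem psum_succ (j : Fin n) : psum d σ (j + 1) = psum d σ j + d (σ j) := by
  have hfilter : (univ.filter fun i : Fin n => (i : ℕ) < j + 1) =
      insert j (univ.filter fun i : Fin n => (i : ℕ) < j) := by
    ext i
    simp only [mem_filter, mem_univ, true_and, mem_insert, Fin.ext_iff]
    omega
  rw [psum, hfilter, sum_insert (by simp), add_comm, psum]

theorem Emap_eq_iff_forall_sub_eq (y : Fin n → ℝ) :
    Emap d y σ = y ↔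
      ∀ j : Fin n, th d y (psum d σ (j + 1)) - th d y (psum d σ j) = y (σ j) := by
  rw [funext_iff, ← σ.forall_congr_right]
  simp only [Emap, Equiv.symm_apply_apply]

end PartialSum

section Thermomajorization

variable {n : ℕ} {d : Fin n → ℝ}

theorem isLeast_th (hd : ∃ i, 0 < d i) (y : Fin n → ℝ) (c : ℝ) :
    IsLeast ((fun i => supportLine d y (y i / d i) c) '' {i | 0 < d i}) (th d y c) :=
  have hfin := Set.toFinite ((fun i => supportLine d y (y i / d i) c) '' {i | 0 < d i})
  ⟨(Set.Nonempty.image _ hd).csInf_mem hfin, fun _ hx => csInf_le hfin.bddBelow hx⟩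

theorem sum_le_th_sum (hd : ∃ i, 0 < d i) (y : Fin n → ℝ) (S : Finset (Fin n)) :
    ∑ i ∈ S, y i ≤ th d y (∑ i ∈ S, d i) := by
  obtain ⟨i, -, hi⟩ := (isLeast_th hd y (∑ i ∈ S, d i)).1
  exact hi ▸ sum_le_supportLine_sum d y _ S

theorem th_sum_eq_sum_iff_exists (hd : ∃ i, 0 < d i) (y : Fin n → ℝ) (S : Finset (Fin n)) :
    th d y (∑ i ∈ S, d i) = ∑ i ∈ S, y i ↔
      ∃ i, 0 < d i ∧ supportLine d y (y i / d i) (∑ i ∈ S, d i) = ∑ i ∈ S, y i := by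
  have hth := isLeast_th hd y (∑ i ∈ S, d i)
  exact ⟨fun h => h ▸ hth.1, fun h => (hth.2 h).antisymm (sum_le_th_sum hd y S)⟩

theorem th_sum_eq_sum_iff [NeZero n] (hd : ∀ i, 0 < d i) (y : Fin n → ℝ) (S : Finset (Fin n)) :
    th d y (∑ i ∈ S, d i) = ∑ i ∈ S, y i ↔
      ∀ k ∈ S, ∀ l ∉ S, y l / d l ≤ y k / d k := by
  simp only [th_sum_eq_sum_iff_exists ⟨0, hd 0⟩, supportLine_sum_eq_sum_iff, hd, true_and,
    ← le_div_iff₀, ← div_le_iff₀]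
  exact exists_forall_le_and_forall_notMem_le_iff (fun i => y i / d i) S

theorem th_zero [NeZero n] (hd : ∀ i, 0 < d i) (y : Fin n → ℝ) : th d y 0 = 0 := by
  simpa using th_sum_eq_sum_iff hd y ∅

theorem th_psum_eq_psum_iff [NeZero n] (hd : ∀ i, 0 < d i) (y : Fin n → ℝ)
    (σ : Equiv.Perm (Fin n)) (j : ℕ) :
    th d y (psum d σ j) = psum y σ j ↔
      ∀ k : Fin n, k < j → ∀ l : Fin n, j ≤ l → y (σ l) / d (σ l) ≤ y (σ k) / d (σ k) := by
  simp only [psum_eq_sum_symm_lt, th_sum_eq_sum_iff hd, mem_filter, mem_univ, true_and, not_lt]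
  rw [← σ.forall_congr_right]
  simp only [Equiv.symm_apply_apply]
  refine forall₂_congr fun k _ => ?_
  rw [← σ.forall_congr_right]
  simp only [Equiv.symm_apply_apply]

theorem Emap_eq_iff_forall_th_psum_eq [NeZero n] (hd : ∀ i, 0 < d i) (y : Fin n → ℝ)
    (σ : Equiv.Perm (Fin n)) :
    Emap d y σ = y ↔ ∀ j ≤ n, th d y (psum d σ j) = psum y σ j := by
  rw [Emap_eq_iff_forall_sub_eq]
  constructor
  · intro hstep j hj
    induction j with
    | zero => rw [psum_zero, psum_zero, th_zero hd]
    | succ j ih =>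
      calc th d y (psum d σ (j + 1)) = th d y (psum d σ j) + y (σ ⟨j, hj⟩) :=
            sub_eq_iff_eq_add'.1 (hstep ⟨j, hj⟩)
        _ = psum y σ j + y (σ ⟨j, hj⟩) := by rw [ih (Nat.le_of_succ_le hj)]
        _ = psum y σ (j + 1) := (psum_succ y σ ⟨j, hj⟩).symm
  · intro h j
    rw [h _ j.isLt, h _ j.isLt.le, psum_succ, add_sub_cancel_left]

end Thermomajorization

theorem antitone_fin_iff_forall_cut {n : ℕ} {α : Type*} [Preorder α] {f : Fin n → α} :
    Antitone f ↔ ∀ j ≤ n, ∀ k : Fin n, k < j → ∀ l : Fin n, j ≤ l → f l ≤ f k := by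
  constructor
  · intro hf j _ k hkj l hjl
    exact hf (Fin.le_def.2 (hkj.le.trans hjl))
  · intro h
    exact antitone_iff_forall_lt.2 fun k l hkl => h l l.isLt.le k hkl l le_rfl

/-- E_{d,y}(σ) = y iff σ sorts y/d non-increasingly. -/
theorem stmt4 (n : ℕ) (hn : 1 ≤ n) (d : Fin n → ℝ) (hd : ∀ i, 0 < d i)
    (y : Fin n → ℝ) (σ : Equiv.Perm (Fin n)) :
    Emap d y σ = y ↔ Antitone (fun j : Fin n => y (σ j) / d (σ j)) := by
  have : NeZero n := ⟨Nat.one_le_iff_ne_zero.1 hn⟩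
  simp only [Emap_eq_iff_forall_th_psum_eq hd, th_psum_eq_psum_iff hd, antitone_fin_iff_forall_cut]
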